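/- Let g, h: Ξ* → Σ* be morphisms on n unknowns, both of rank n − 1, and suppose the entire systems K_g and K_h are different. Then every word equation that is satisfied by both g and h (i.e., every equation in K_g ∩ K_h) is balanced. -/

import Mathlib

open Polynomial

/-- The characteristic polynomial `P(w)` of a word. -/
noncomputable def wordPoly (w : List ℕ) : Polynomial ℤ :=
  ∑ i ∈ Finset.range w.length, Polynomial.C (w.getD i 0 : ℤ) * Polynomial.X ^ i

/-- Application of a morphism (given by the images of the unknowns) to a word. -/
def mApply {n : ℕ} {β : Type*} (h : Fin n → List β) (w : List (Fin n)) : List β :=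
  (w.map h).flatten

/-- The morphism maps every unknown to a word over the alphabet `A`. -/
def IntoAlph {n : ℕ} (A : Finset ℕ) (h : Fin n → List ℕ) : Prop :=
  ∀ i, ∀ a ∈ h i, a ∈ A

/-- `w` is a product of words from `A`. -/
def InStar (A : Finset (List ℕ)) (w : List ℕ) : Prop :=
  ∃ l : List (List ℕ), (∀ u ∈ l, u ∈ A) ∧ l.flatten = w

/-- The combinatorial rank of a morphism: the smallest `r` such that there is a set of
`r` words whose products contain all images of the unknowns. -/
noncomputable def mRank {n : ℕ} (h : Fin n → List ℕ) : ℕ :=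
  sInf {r | ∃ A : Finset (List ℕ), A.card = r ∧ ∀ i, InStar A (h i)}

/-- The length type of a morphism, as a rational vector. -/
def lenQ {n : ℕ} (h : Fin n → List ℕ) : Fin n → ℚ :=
  fun i => ((h i).length : ℚ)

/-- `|w|_L`: the length of the image of `w` under any morphism of length type `L`. -/
def lenL {n : ℕ} (L : Fin n → ℕ) (w : List (Fin n)) : ℕ :=
  (w.map L).sum

/-- The polynomial `Q_{E,x,L}` for the word equation `u = v`, the unknown `x` and the
length type `L`. -/
noncomputable def eqPoly {n : ℕ} (u v : List (Fin n)) (x : Fin n) (L : Fin n → ℕ) :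
    Polynomial ℤ :=
  (∑ i ∈ Finset.range u.length,
      if u.getD i x = x then (Polynomial.X : Polynomial ℤ) ^ lenL L (u.take i) else 0)
    - ∑ i ∈ Finset.range v.length,
      if v.getD i x = x then (Polynomial.X : Polynomial ℤ) ^ lenL L (v.take i) else 0

/-- Embedding of `ℤ[X]` into the field `ℚ(X)` of rational functions. -/
noncomputable def toRF (p : Polynomial ℤ) : RatFunc ℚ :=
  algebraMap (Polynomial ℚ) (RatFunc ℚ) (p.map (Int.castRingHom ℚ))

/-
Suppose a common equation `u = v` of `g` and `h` is unbalanced; we show `K_g ⊆ K_h`. By the defect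
theorem, a maximal-rank `g` generates the same system as some `f : Ξ* → Δ*` with `|Δ| = n - 1` whose
incidence matrix has independent rows. Both these rows and the length vector of `h` are orthogonal
to the nonzero vector `|u|_x - |v|_x`, so the length of `h x` is a weighted sum of the letters of
`f x`. Giving a letter of weight `w` the value `exp (s w)`, and `x` the value `exp (s |h x|)`, turns
the Fox derivatives of `f` and `h` into real vectors depending on `s`. For `s` near `0` the Fox
Jacobian of `f` still has independent rows, so the vectors `∂u' - ∂v'` with `u' = v'` in `K_f` are
all multiples of `∂u - ∂v` and are killed by the Jacobian of `h`. As this holds for infinitely many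
values `exp s`, the letters of `h u'` and `h v'` occur in the same positions.
-/

open scoped Matrix

section FoxDerivatives

variable {ι κ α R : Type*}

/-- The Fox derivatives `∂w/∂x` of a word `w` with respect to all letters `x`, evaluated at the
weights `σ`: the sum of the weights of the prefixes of `w` that are followed by the letter `x`. For
constant weights `X` this is the polynomial marking the positions of `x` in `w`, and for constant
weights `1` it counts the occurrences of `x`. -/
def foxDeriv [Semiring R] [DecidableEq ι] (σ : ι → R) : List ι → ι → R
  | [] => 0
  | x :: w => Pi.single x 1 + σ x • foxDeriv σ w

/-- The Jacobian of Fox derivatives of the morphism `f`, evaluated at the weights `τ`; for `τ = 1`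
it is the incidence matrix of `f`. -/
def foxJacobian [Semiring R] [DecidableEq κ] (τ : κ → R) (f : ι → List κ) : Matrix κ ι R :=
  Matrix.of fun a x => foxDeriv τ (f x) a

theorem foxDeriv_append [Semiring R] [DecidableEq ι] (σ : ι → R) (u v : List ι) :
    foxDeriv σ (u ++ v) = foxDeriv σ u + (u.map σ).prod • foxDeriv σ v := by
  induction u with
  | nil => simp [foxDeriv]
  | cons x u ih =>
    simp only [List.cons_append, foxDeriv, ih, smul_add, smul_smul, List.map_cons, List.prod_cons,
      add_assoc]

theorem foxDeriv_one_eq_count [Semiring R] [DecidableEq ι] (u : List ι) (x : ι) :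
    foxDeriv (1 : ι → R) u x = u.count x := by
  induction u with
  | nil => simp [foxDeriv]
  | cons y u ih => simp [foxDeriv, ih, List.count_cons, Pi.single_apply, add_comm, @eq_comm _ x y]

theorem map_foxDeriv {S : Type*} [Semiring R] [Semiring S] [DecidableEq ι] (φ : R →+* S)
    (σ : ι → R) (u : List ι) (x : ι) :
    φ (foxDeriv σ u x) = foxDeriv (fun y => φ (σ y)) u x := by
  induction u with
  | nil => simp [foxDeriv]
  | cons y u ih => simp [foxDeriv, ih, Pi.single_apply, apply_ite φ]

theorem continuous_foxDeriv {T : Type*} [TopologicalSpace T] [Semiring R] [TopologicalSpace R]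
    [IsTopologicalSemiring R] [DecidableEq ι] {σ : T → ι → R} (hσ : Continuous σ) (u : List ι) :
    Continuous fun t => foxDeriv (σ t) u := by
  induction u with
  | nil => exact continuous_const
  | cons x u ih => exact continuous_const.add (((continuous_apply x).comp hσ).smul ih)

theorem sum_map_eq_dotProduct_foxDeriv_one [CommSemiring R] [Fintype ι] [DecidableEq ι]
    (c : ι → R) (u : List ι) : (u.map c).sum = c ⬝ᵥ foxDeriv 1 u := by
  induction u with
  | nil => simp [foxDeriv]
  | cons x u ih => simp [foxDeriv, ih, dotProduct_add]

/-- The chain rule of Fox calculus. -/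
theorem foxDeriv_flatMap [CommSemiring R] [Fintype ι] [DecidableEq ι] [DecidableEq κ]
    {τ : κ → R} {σ : ι → R} {f : ι → List κ} (hσ : ∀ x, ((f x).map τ).prod = σ x) (u : List ι) :
    foxDeriv τ (u.flatMap f) = foxJacobian τ f *ᵥ foxDeriv σ u := by
  induction u with
  | nil => simp [foxDeriv]
  | cons x u ih =>
    simp only [List.flatMap_cons, foxDeriv_append, foxDeriv, ih, hσ, Matrix.mulVec_add,
      Matrix.mulVec_smul, Matrix.mulVec_single_one]
    rfl

theorem foxJacobian_mulVec_foxDeriv_sub [CommRing R] [Fintype ι] [DecidableEq ι] [DecidableEq κ]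
    {τ : κ → R} {σ : ι → R} {f : ι → List κ} (hσ : ∀ x, ((f x).map τ).prod = σ x) {u v : List ι}
    (h : u.flatMap f = v.flatMap f) :
    foxJacobian τ f *ᵥ (foxDeriv σ u - foxDeriv σ v) = 0 := by
  rw [Matrix.mulVec_sub, ← foxDeriv_flatMap hσ, ← foxDeriv_flatMap hσ, h, sub_self]

theorem foxJacobian_flatMap [CommSemiring R] {μ : Type*} [Fintype κ] [DecidableEq κ]
    [DecidableEq μ] {τ : μ → R} {σ : κ → R} {f : κ → List μ}
    (hσ : ∀ x, ((f x).map τ).prod = σ x) (φ : ι → List κ) :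
    foxJacobian τ (fun i => (φ i).flatMap f) = foxJacobian τ f * foxJacobian σ φ := by
  ext a i
  exact congrFun (foxDeriv_flatMap hσ (φ i)) a

theorem foxDeriv_X_injective [Semiring R] [Nontrivial R] [DecidableEq α] :
    Function.Injective (foxDeriv fun _ : α => (X : R[X])) := by
  have coeff_zero (a : α) (u : List α) (b : α) :
      (foxDeriv (fun _ => (X : R[X])) (a :: u) b).coeff 0 = if b = a then 1 else 0 := by
    simp [foxDeriv, Pi.single_apply, apply_ite (coeff · 0)]
  intro u
  induction u with
  | nil =>
    rintro (_ | ⟨b, v⟩) h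
    · rfl
    · simpa [coeff_zero, foxDeriv] using congrArg (coeff · 0) (congrFun h b)
  | cons a u ih =>
    rintro (_ | ⟨b, v⟩) h
    · simpa [coeff_zero, foxDeriv] using congrArg (coeff · 0) (congrFun h a)
    · obtain rfl : a = b := by
        simpa [coeff_zero] using congrArg (coeff · 0) (congrFun h a)
      refine congrArg (a :: ·) (ih (funext fun x => ?_))
      ext k
      simpa [foxDeriv, Pi.single_apply, apply_ite (coeff · (k + 1)), coeff_one]
        using congrArg (coeff · (k + 1)) (congrFun h x)

theorem eq_of_infinite_foxDeriv_const_eq [CommRing R] [IsDomain R] [DecidableEq α] {u v : List α}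
    (h : {t : R | foxDeriv (fun _ => t) u = foxDeriv (fun _ => t) v}.Infinite) : u = v := by
  have eval_foxDeriv (t : R) (w : List α) (b : α) :
      (foxDeriv (fun _ => (X : R[X])) w b).eval t = foxDeriv (fun _ => t) w b := by
    simpa using map_foxDeriv (evalRingHom t) (fun _ => X) w b
  refine foxDeriv_X_injective (R := R) (funext fun b => eq_of_infinite_eval_eq _ _ (h.mono ?_))
  intro t ht
  simpa only [Set.mem_ofPred_eq, eval_foxDeriv] using congrFun ht b

end FoxDerivatives

section DefectTheorem

variable {ι κ α : Type*}

theorem flatMap_injective_of_prefix_free {g : ι → List α} (hne : ∀ x, g x ≠ [])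
    (hg : ∀ x y, g x <+: g y → x = y) : Function.Injective (List.flatMap g) := by
  intro u
  induction u with
  | nil =>
    rintro (_ | ⟨y, v⟩) h
    · rfl
    · simp [hne] at h
  | cons x u ih =>
    rintro (_ | ⟨y, v⟩) h
    · simp [hne] at h
    · simp only [List.flatMap_cons] at h
      obtain rfl : x = y := by
        rcases List.prefix_or_prefix_of_prefix (List.prefix_append (g x) _)
          (h ▸ List.prefix_append (g y) _) with hxy | hyx
        exacts [hg x y hxy, (hg y x hyx).symm]
      rw [ih (List.append_cancel_left h)]

theorem flatMap_append_singleton_injective (p : ι → List ι) :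
    Function.Injective (List.flatMap fun x => p x ++ [x]) := by
  have reversed : Function.Injective (List.flatMap fun x => x :: (p x).reverse) :=
    flatMap_injective_of_prefix_free (by simp) fun x y h => (List.cons_prefix_cons.1 h).1
  intro u v h
  have h' := congrArg List.reverse h
  simp only [List.reverse_flatMap, Function.comp_def, List.reverse_append, List.reverse_singleton,
    List.singleton_append] at h'
  exact List.reverse_injective (reversed h')

theorem card_subtype_ne_add_one [Fintype ι] [DecidableEq ι] (x₀ : ι) :
    Fintype.card {x // x ≠ x₀} + 1 = Fintype.card ι := by
  have : 0 < Fintype.card ι := Fintype.card_pos_iff.2 ⟨x₀⟩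
  rw [Fintype.card_subtype_compl, Fintype.card_subtype_eq]
  omega

/-- The morphism deleting the letter `x₀`. -/
def eraseLetter [DecidableEq ι] (x₀ i : ι) : List {x // x ≠ x₀} :=
  if h : i = x₀ then [] else [⟨i, h⟩]

theorem flatMap_eraseLetter [DecidableEq ι] {g : ι → List α} {x₀ : ι} (hx₀ : g x₀ = []) (i : ι) :
    (eraseLetter x₀ i).flatMap (fun x : {x // x ≠ x₀} => g x) = g i := by
  by_cases hi : i = x₀ <;> simp [eraseLetter, hi, hx₀]

theorem linearIndependent_foxJacobian_eraseLetter {R : Type*} [CommRing R] [Finite ι]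
    [DecidableEq ι] (x₀ : ι) :
    LinearIndependent R (foxJacobian (1 : {x // x ≠ x₀} → R) (eraseLetter x₀)).row := by
  have := Fintype.ofFinite ι
  rw [← Matrix.vecMul_injective_iff]
  intro w w' h
  funext a
  simpa [Matrix.vecMul, dotProduct, foxJacobian, eraseLetter, foxDeriv, Pi.single_apply, a.2]
    using congrFun h a

/-- The elementary morphism sending `y` to `xy` and fixing all other letters. -/
def prependLetter [DecidableEq ι] (x y i : ι) : List ι :=
  (if i = y then [x] else []) ++ [i]

theorem flatMap_prependLetter_injective [DecidableEq ι] (x y : ι) :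
    Function.Injective (List.flatMap (prependLetter x y)) :=
  flatMap_append_singleton_injective _

theorem foxJacobian_one_prependLetter {R : Type*} [CommRing R] [DecidableEq ι] (x y : ι) :
    foxJacobian (1 : ι → R) (prependLetter x y) = Matrix.transvection x y 1 := by
  ext a i
  by_cases hi : i = y
  · subst hi
    simp [foxJacobian, prependLetter, foxDeriv, Matrix.transvection, Matrix.one_apply,
      Matrix.single_apply, Pi.single_apply, add_comm, eq_comm]
  · simp [foxJacobian, prependLetter, foxDeriv, Matrix.transvection, Matrix.one_apply,
      Pi.single_apply, hi, Ne.symm hi]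

theorem linearIndependent_foxJacobian_flatMap_prependLetter {R : Type*} [CommRing R] [Finite ι]
    [DecidableEq ι] [Finite κ] [DecidableEq κ] {f : ι → List κ}
    (hf : LinearIndependent R (foxJacobian (1 : κ → R) f).row) {x y : ι} (hxy : x ≠ y) :
    LinearIndependent R
      (foxJacobian (1 : κ → R) fun i => (prependLetter x y i).flatMap f).row := by
  have := Fintype.ofFinite ι
  have := Fintype.ofFinite κ
  have hT : IsUnit (Matrix.transvection x y (1 : R)) := by
    simp [Matrix.isUnit_iff_isUnit_det, Matrix.det_transvection_of_ne x y hxy]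
  rw [← Matrix.vecMul_injective_iff] at hf ⊢
  rw [foxJacobian_flatMap (σ := 1) (fun _ => List.prod_map_one), foxJacobian_one_prependLetter]
  simp only [← Matrix.vecMul_vecMul]
  exact (Matrix.vecMul_injective_of_isUnit hT).comp hf

theorem flatMap_update_prependLetter [DecidableEq ι] {g : ι → List α} {x y : ι} (hxy : x ≠ y)
    {s : List α} (hs : g x ++ s = g y) (i : ι) :
    (prependLetter x y i).flatMap (Function.update g y s) = g i := by
  by_cases hi : i = y <;> simp [prependLetter, hi, hxy, hs]

theorem sum_length_update_lt [Fintype ι] [DecidableEq ι] {g : ι → List α} {y : ι} {s : List α}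
    (hs : s.length < (g y).length) :
    ∑ i, (Function.update g y s i).length < ∑ i, (g i).length := by
  refine Finset.sum_lt_sum (fun i _ => ?_) ⟨y, Finset.mem_univ y, by simpa using hs⟩
  by_cases hi : i = y
  · subst hi
    simpa using hs.le
  · simp [hi]

/-- The defect theorem, with the additional information that the incidence matrix of the first
factor has full row rank. -/
theorem exists_factorization_of_flatMap_eq (R : Type*) [CommRing R] [Finite ι] [DecidableEq ι]
    (g : ι → List α) {u v : List ι} (huv : u ≠ v) (h : u.flatMap g = v.flatMap g) :
    ∃ (x₀ : ι) (f : ι → List {x // x ≠ x₀}) (ψ : {x // x ≠ x₀} → List α),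
      (∀ i, (f i).flatMap ψ = g i) ∧
        LinearIndependent R (foxJacobian (1 : {x // x ≠ x₀} → R) f).row := by
  have := Fintype.ofFinite ι
  induction hN : ∑ i, (g i).length using Nat.strong_induction_on generalizing g u v with
  | _ N ih =>
    by_cases hne : ∃ x₀, g x₀ = []
    · obtain ⟨x₀, hx₀⟩ := hne
      exact ⟨x₀, eraseLetter x₀, fun x : {x // x ≠ x₀} => g x, flatMap_eraseLetter hx₀,
        linearIndependent_foxJacobian_eraseLetter x₀⟩
    push Not at hne
    obtain ⟨x, y, ⟨s, hs⟩, hxy⟩ : ∃ x y, g x <+: g y ∧ x ≠ y := by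
      by_contra! hfree
      exact huv (flatMap_injective_of_prefix_free hne hfree h)
    have hlt : s.length < (g y).length := by
      rw [← hs, List.length_append]
      exact Nat.lt_add_of_pos_left (List.length_pos_iff.2 (hne x))
    have hφ := flatMap_update_prependLetter hxy hs
    obtain ⟨x₀, f, ψ, hfψ, hf⟩ := ih _ (hN ▸ sum_length_update_lt hlt) (Function.update g y s)
      ((flatMap_prependLetter_injective x y).ne huv)
      (by simpa only [List.flatMap_assoc, hφ] using h) rfl
    exact ⟨x₀, fun i => (prependLetter x y i).flatMap f, ψ,
      fun i => by simp only [List.flatMap_assoc, hfψ, hφ],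
      linearIndependent_foxJacobian_flatMap_prependLetter hf hxy⟩

/-- The combinatorial rank, as `mRank`, over arbitrary sets of unknowns and letters. It has the
junk value `0` if the images of the unknowns are not generated by finitely many words. -/
noncomputable def combRank (g : ι → List α) : ℕ :=
  sInf {r | ∃ A : Finset (List α), A.card = r ∧
    ∀ i, ∃ l : List (List α), (∀ w ∈ l, w ∈ A) ∧ l.flatten = g i}

theorem mRank_eq_combRank {n : ℕ} (g : Fin n → List ℕ) : mRank g = combRank g := rfl

theorem combRank_le_card_of_factorization [Fintype κ] {g : ι → List α} {f : ι → List κ}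
    {ψ : κ → List α} (hfψ : ∀ i, (f i).flatMap ψ = g i) : combRank g ≤ Fintype.card κ := by
  classical
  have hle : combRank g ≤ (Finset.univ.image ψ).card :=
    Nat.sInf_le ⟨_, rfl, fun i => ⟨(f i).map ψ, by simp, hfψ i⟩⟩
  exact hle.trans Finset.card_image_le

theorem flatMap_injective_of_card_le_combRank [Fintype κ] {g : ι → List α} {f : ι → List κ}
    {ψ : κ → List α} (hfψ : ∀ i, (f i).flatMap ψ = g i) (hcard : Fintype.card κ ≤ combRank g) :
    Function.Injective (List.flatMap ψ) := by
  classical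
  intro p q hpq
  by_contra hne
  obtain ⟨x₀, f', ψ', hψ', -⟩ := exists_factorization_of_flatMap_eq ℤ ψ hne hpq
  have hle : combRank g ≤ Fintype.card {x // x ≠ x₀} :=
    combRank_le_card_of_factorization (f := fun i => (f i).flatMap f') (ψ := ψ') fun i => by
      simp only [List.flatMap_assoc, hψ', hfψ]
  have := card_subtype_ne_add_one x₀
  omega

/-- The set `K_g` of all word equations satisfied by the morphism `g`. -/
def entireSystem (g : ι → List α) : Set (List ι × List ι) :=
  {e | e.1.flatMap g = e.2.flatMap g}

theorem entireSystem_eq_of_factorization {g : ι → List α} {f : ι → List κ} {ψ : κ → List α}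
    (hfψ : ∀ i, (f i).flatMap ψ = g i) (hψ : Function.Injective (List.flatMap ψ)) :
    entireSystem g = entireSystem f := by
  ext ⟨u, v⟩
  simp only [entireSystem, Set.mem_ofPred_eq, ← hψ.eq_iff, List.flatMap_assoc, hfψ]

end DefectTheorem

section LinearAlgebra

variable {K ι κ : Type*} [Field K] [Fintype ι] [Fintype κ] {F : Matrix κ ι K}

theorem exists_smul_eq_of_mulVec_eq_zero (hF : LinearIndependent K F.row)
    (hcard : Fintype.card ι = Fintype.card κ + 1) {q r : ι → K} (hq₀ : q ≠ 0) (hq : F *ᵥ q = 0)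
    (hr : F *ᵥ r = 0) : ∃ c : K, c • q = r := by
  have hker : Module.finrank K F.mulVecLin.ker = 1 := by
    have hrank : Module.finrank K F.mulVecLin.range = Fintype.card κ := hF.rank_matrix
    have := F.mulVecLin.finrank_range_add_finrank_ker
    rw [hrank, Module.finrank_fintype_fun_eq_card, hcard] at this
    omega
  have hq' : (⟨q, hq⟩ : F.mulVecLin.ker) ≠ 0 := by simpa [Subtype.ext_iff] using hq₀
  obtain ⟨c, hc⟩ := (finrank_eq_one_iff_of_nonzero' _ hq').1 hker ⟨r, hr⟩
  exact ⟨c, congrArg Subtype.val hc⟩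

theorem exists_vecMul_eq_of_dotProduct_eq_zero (hF : LinearIndependent K F.row)
    (hcard : Fintype.card ι = Fintype.card κ + 1) {q c : ι → K} (hq₀ : q ≠ 0) (hq : F *ᵥ q = 0)
    (hc : c ⬝ᵥ q = 0) : ∃ w : κ → K, w ᵥ* F = c := by
  classical
  have hle : F.vecMulLinear.range ≤ (dotProductEquiv K ι q).ker := by
    rintro _ ⟨w, rfl⟩
    change q ⬝ᵥ (w ᵥ* F) = 0
    rw [dotProduct_comm, ← Matrix.dotProduct_mulVec, hq, dotProduct_zero]
  have hfinrank : Module.finrank K (dotProductEquiv K ι q).ker =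
      Module.finrank K F.vecMulLinear.range := by
    have hker := Module.Dual.finrank_ker_add_one_of_ne_zero
      ((dotProductEquiv K ι).map_ne_zero_iff.2 hq₀)
    rw [LinearMap.finrank_range_of_inj (Matrix.vecMul_injective_iff.2 hF)]
    rw [Module.finrank_fintype_fun_eq_card] at hker ⊢
    omega
  have hmem : c ∈ (dotProductEquiv K ι q).ker := (dotProduct_comm q c).trans hc
  rwa [← Submodule.eq_of_le_of_finrank_le hle hfinrank.le] at hmem

end LinearAlgebra

section CommonEquations

theorem prod_map_exp_mul {γ : Type*} (s : ℝ) (w : γ → ℝ) (l : List γ) :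
    (l.map fun a => Real.exp (s * w a)).prod = Real.exp (s * (l.map w).sum) := by
  rw [← List.sum_map_mul_left, Real.exp_list_sum, List.map_map, Function.comp_def]

theorem eventually_linearIndependent_foxJacobian {𝕜 T ι κ : Type*} [NontriviallyNormedField 𝕜]
    [CompleteSpace 𝕜] [TopologicalSpace T] [Finite ι] [Finite κ] [DecidableEq κ]
    {f : ι → List κ} {τ : T → κ → 𝕜} (hτ : Continuous τ) {t₀ : T}
    (h₀ : LinearIndependent 𝕜 (foxJacobian (τ t₀) f).row) :
    ∀ᶠ t in nhds t₀, LinearIndependent 𝕜 (foxJacobian (τ t) f).row := by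
  have := Fintype.ofFinite ι
  have hJ : Continuous fun t => (foxJacobian (τ t) f).row :=
    continuous_pi fun a => continuous_pi fun i =>
      (continuous_apply a).comp (continuous_foxDeriv hτ (f i))
  exact hJ.continuousAt.eventually (isOpen_setOfPred_linearIndependent.eventually_mem h₀)

variable {ι κ α β : Type*} [Fintype ι] [Fintype κ] [DecidableEq ι] [DecidableEq κ]
  {f : ι → List κ} {h : ι → List β} {u v : List ι}

theorem foxDeriv_flatMap_eq_of_linearIndependent {K : Type*} [Field K] [DecidableEq β]
    {τ : κ → K} {σ : ι → K} {ρ : β → K} (hτ : ∀ i, ((f i).map τ).prod = σ i)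
    (hρ : ∀ i, ((h i).map ρ).prod = σ i) (hJ : LinearIndependent K (foxJacobian τ f).row)
    (hcard : Fintype.card ι = Fintype.card κ + 1) (huv : foxDeriv σ u ≠ foxDeriv σ v)
    (hfuv : u.flatMap f = v.flatMap f) (hhuv : u.flatMap h = v.flatMap h) {p q : List ι}
    (hfpq : p.flatMap f = q.flatMap f) :
    foxDeriv ρ (p.flatMap h) = foxDeriv ρ (q.flatMap h) := by
  obtain ⟨c, hc⟩ := exists_smul_eq_of_mulVec_eq_zero hJ hcard (sub_ne_zero.2 huv)
    (foxJacobian_mulVec_foxDeriv_sub hτ hfuv) (foxJacobian_mulVec_foxDeriv_sub hτ hfpq)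
  rw [← sub_eq_zero, foxDeriv_flatMap hρ, foxDeriv_flatMap hρ, ← Matrix.mulVec_sub, ← hc,
    Matrix.mulVec_smul, foxJacobian_mulVec_foxDeriv_sub hρ hhuv, smul_zero]

theorem exists_weight_sum_map_eq_length {K : Type*} [Field K]
    (hf : LinearIndependent K (foxJacobian (1 : κ → K) f).row)
    (hcard : Fintype.card ι = Fintype.card κ + 1)
    (huv : foxDeriv (1 : ι → K) u ≠ foxDeriv 1 v) (hfuv : u.flatMap f = v.flatMap f)
    (hhuv : u.flatMap h = v.flatMap h) :
    ∃ w : κ → K, ∀ i, ((f i).map w).sum = (h i).length := by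
  have hlength (p : List ι) :
      (fun i => ((h i).length : K)) ⬝ᵥ foxDeriv 1 p = (p.flatMap h).length := by
    rw [← sum_map_eq_dotProduct_foxDeriv_one]
    simp [List.length_flatMap, Function.comp_def]
  obtain ⟨w, hw⟩ := exists_vecMul_eq_of_dotProduct_eq_zero hf hcard (sub_ne_zero.2 huv)
    (foxJacobian_mulVec_foxDeriv_sub (fun _ => List.prod_map_one) hfuv)
    (c := fun i => ((h i).length : K)) (by rw [dotProduct_sub, hlength, hlength, hhuv, sub_self])
  exact ⟨w, fun i => (sum_map_eq_dotProduct_foxDeriv_one w (f i)).trans (congrFun hw i)⟩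

theorem entireSystem_subset_of_linearIndependent_foxJacobian
    (hf : LinearIndependent ℝ (foxJacobian (1 : κ → ℝ) f).row)
    (hcard : Fintype.card ι = Fintype.card κ + 1)
    (huv : foxDeriv (1 : ι → ℝ) u ≠ foxDeriv 1 v) (hfuv : u.flatMap f = v.flatMap f)
    (hhuv : u.flatMap h = v.flatMap h) : entireSystem f ⊆ entireSystem h := by
  classical
  obtain ⟨w, hw⟩ := exists_weight_sum_map_eq_length hf hcard huv hfuv hhuv
  let τ (s : ℝ) (a : κ) : ℝ := Real.exp (s * w a)
  let σ (s : ℝ) (i : ι) : ℝ := Real.exp (s * (h i).length)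
  have hτ (s : ℝ) (i : ι) : ((f i).map (τ s)).prod = σ s i := by
    simp only [τ, σ, prod_map_exp_mul, hw]
  have hρ (s : ℝ) (i : ι) : ((h i).map fun _ => Real.exp s).prod = σ s i := by
    simp [σ, ← Real.exp_nat_mul, mul_comm]
  have hτ₀ : τ 0 = 1 := by funext; simp [τ]
  have hσ₀ : σ 0 = 1 := by funext; simp [σ]
  have hσ_cont : Continuous σ := by fun_prop
  have hJ : ∀ᶠ s in nhds 0, LinearIndependent ℝ (foxJacobian (τ s) f).row :=
    eventually_linearIndependent_foxJacobian (by fun_prop) (by rwa [hτ₀])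
  have hne : ∀ᶠ s in nhds 0, foxDeriv (σ s) u ≠ foxDeriv (σ s) v :=
    (isOpen_ne_fun (continuous_foxDeriv hσ_cont u) (continuous_foxDeriv hσ_cont v)).mem_nhds
      (by simpa only [Set.mem_ofPred_eq, hσ₀] using huv)
  rintro ⟨p, q⟩ hpq
  refine eq_of_infinite_foxDeriv_const_eq (R := ℝ)
    (((infinite_of_mem_nhds 0 (hJ.and hne)).image Real.exp_injective.injOn).mono ?_)
  rintro _ ⟨s, ⟨hJs, hnes⟩, rfl⟩
  exact foxDeriv_flatMap_eq_of_linearIndependent (hτ s) (hρ s) hJs hcard hnes hfuv hhuv hpq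

theorem entireSystem_subset_of_unbalanced {g : ι → List α}
    (hrank : Fintype.card ι ≤ combRank g + 1) (hguv : u.flatMap g = v.flatMap g)
    (hhuv : u.flatMap h = v.flatMap h) {x : ι} (hx : u.count x ≠ v.count x) :
    entireSystem g ⊆ entireSystem h := by
  obtain ⟨x₀, f, ψ, hfψ, hf⟩ :=
    exists_factorization_of_flatMap_eq ℝ g (ne_of_apply_ne (List.count x) hx) hguv
  have hcard := card_subtype_ne_add_one x₀
  have hgf := entireSystem_eq_of_factorization hfψ
    (flatMap_injective_of_card_le_combRank hfψ (by omega))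
  have hfuv : (u, v) ∈ entireSystem f := hgf ▸ hguv
  have hd : foxDeriv (1 : ι → ℝ) u ≠ foxDeriv 1 v :=
    ne_of_apply_ne (· x) (by simpa only [foxDeriv_one_eq_count, ne_eq, Nat.cast_inj] using hx)
  exact hgf ▸ entireSystem_subset_of_linearIndependent_foxJacobian hf hcard.symm hd hfuv hhuv

theorem common_equations_balanced_general {g : ι → List α}
    (hrg : Fintype.card ι ≤ combRank g + 1) (hrh : Fintype.card ι ≤ combRank h + 1)
    (hK : entireSystem g ≠ entireSystem h) :
    ∀ u v : List ι, (u, v) ∈ entireSystem g → (u, v) ∈ entireSystem h →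
      ∀ x, u.count x = v.count x := by
  intro u v hg hh x
  by_contra hx
  exact hK ((entireSystem_subset_of_unbalanced hrg hg hh hx).antisymm
    (entireSystem_subset_of_unbalanced hrh hh hg hx))

end CommonEquations

/-- If `g, h : Ξ* → Σ*` are morphisms of rank `n − 1` whose entire systems `K_g` and `K_h`
differ, then every word equation satisfied by both `g` and `h` is balanced. -/
theorem common_equations_balanced {n : ℕ}
    (A : Finset ℕ) (hA : ∀ a ∈ A, 0 < a)
    (g h : Fin n → List ℕ) (hg : IntoAlph A g) (hh : IntoAlph A h)
    (hrg : mRank g = n - 1) (hrh : mRank h = n - 1)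
    (hK : {e : List (Fin n) × List (Fin n) | mApply g e.1 = mApply g e.2}
        ≠ {e : List (Fin n) × List (Fin n) | mApply h e.1 = mApply h e.2}) :
    ∀ u v : List (Fin n), mApply g u = mApply g v → mApply h u = mApply h v →
      ∀ x : Fin n, u.count x = v.count x := by
  rw [mRank_eq_combRank] at hrg hrh
  exact common_equations_balanced_general (by rw [Fintype.card_fin]; omega)
    (by rw [Fintype.card_fin]; omega) hK
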